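/- arXiv:1501.03420 — 6 statements merged into one kernel-verified Lean document; each statement's English description precedes it below -/
import Mathlib

section
/- Let {a_n} be positive reals, {b_n} real, {α_n} positive reals, λ ∈ ℝ, and let {u_n} be a generalized eigenvector associated with λ. Set S_n = a_{n−1} α_{n−1} u_{n−1}² + a_n α_n u_n² − (λ − b_n) α_{n−1} u_{n−1} u_n. Assume a_n → ∞, (α_{n−1}/α_n)(a_n/a_{n−1}) → 1, limsup_{n→∞} |b_n|/a_n < 2, and ∑_{n≥0} 1/(a_n α_n) = ∞. If liminf_{n→∞} S_n > 0, then ∑_{n≥0} u_n² = ∞. -/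
/-!
The key point is the one-step bound `Sₙ₊₁ ≤ 5 aₙ₊₁ αₙ₊₁ (uₙ₊₁² + uₙ₊₂²)`, valid for large `n`.
Estimating `Sₙ₊₁` directly by `uₙ` and `uₙ₊₁` is not enough, since `aₙ αₙ / (aₙ₊₁ αₙ₊₁)` need not
be bounded. Instead `aₙ uₙ` is eliminated through the recurrence, which gives
`Sₙ₊₁ = A β U² - ρ A t U V + ρ A² V²`, where `A = aₙ₊₁`, `β = αₙ₊₁`, `t = lam - bₙ₊₁`, `U = uₙ₊₁`,
`V = uₙ₊₂` and `ρ = αₙ / aₙ`. For large `n` one has `ρ A ≤ 2 β` and `|t| ≤ 3 A`, and the bound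
follows (`S_le`). If `Sₙ₊₁ > c > 0` eventually, then `1 / (aₙ₊₁ αₙ₊₁)` is dominated by
`(5 / c) (uₙ₊₁² + uₙ₊₂²)`, so square-summability of `u` would force `∑ 1 / (aₙ αₙ) < ∞`.
-/

open Filter Topology

noncomputable section

/-- `u` is a generalized eigenvector of the Jacobi matrix `(a, b)` associated with `lam`:
`(u 0, u 1) ≠ (0, 0)` and `aₙ uₙ₊₁ = (lam − bₙ) uₙ − aₙ₋₁ uₙ₋₁` for all `n ≥ 1`. -/
def IsGenEig (a b : ℕ → ℝ) (lam : ℝ) (u : ℕ → ℝ) : Prop :=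
  ¬(u 0 = 0 ∧ u 1 = 0) ∧
  ∀ n : ℕ, a (n + 1) * u (n + 2) = (lam - b (n + 1)) * u (n + 1) - a n * u n

/-- The one-step bound, with `(a, A) = (aₙ, aₙ₊₁)`, `(α, β) = (αₙ, αₙ₊₁)`, `t = lam - bₙ₊₁` and
`(w, U, V) = (uₙ, uₙ₊₁, uₙ₊₂)`. -/
lemma S_le {a A α β t w U V : ℝ} (ha : 0 < a) (hα : 0 < α) (hA : 0 < A) (hβ : 0 < β)
    (hr : α / β * (A / a) ≤ 2) (ht : |t| ≤ 3 * A) (hrec : A * V = t * U - a * w) :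
    a * α * w ^ 2 + A * β * U ^ 2 - t * α * w * U ≤ 5 * (U ^ 2 + V ^ 2) * (A * β) := by
  have hw : w = (t * U - A * V) / a := by
    rw [eq_div_iff ha.ne']
    linarith
  have hρ : α / a * A ≤ 2 * β := by
    have h : α / a * A = α / β * (A / a) * β := by field_simp
    rw [h]
    exact mul_le_mul_of_nonneg_right hr hβ.le
  have hid : a * α * w ^ 2 + A * β * U ^ 2 - t * α * w * U
      = A * β * U ^ 2 + α / a * A * (A * V ^ 2 - t * (U * V)) := by
    rw [hw]
    field_simp
    ring
  have hUV : -(t * (U * V)) ≤ 3 * A * ((U ^ 2 + V ^ 2) / 2) := by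
    have h2 : |U * V| ≤ (U ^ 2 + V ^ 2) / 2 := by
      rw [abs_le]
      constructor <;> nlinarith [sq_nonneg (U + V), sq_nonneg (U - V)]
    calc -(t * (U * V)) ≤ |t * (U * V)| := neg_le_abs _
      _ = |t| * |U * V| := abs_mul _ _
      _ ≤ _ := mul_le_mul ht h2 (abs_nonneg _) (by positivity)
  have hmain : α / a * A * (A * V ^ 2 - t * (U * V))
      ≤ 2 * β * (A * V ^ 2 + 3 * A * ((U ^ 2 + V ^ 2) / 2)) :=
    calc α / a * A * (A * V ^ 2 - t * (U * V))
        ≤ α / a * A * (A * V ^ 2 + 3 * A * ((U ^ 2 + V ^ 2) / 2)) :=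
          mul_le_mul_of_nonneg_left (by linarith) (by positivity)
      _ ≤ _ := mul_le_mul_of_nonneg_right hρ (by positivity)
  rw [hid]
  nlinarith [mul_nonneg (mul_pos hA hβ).le (sq_nonneg U)]

/-- Corollary 5: if additionally `∑ 1/(aₙαₙ) = ∞` and `liminf Sₙ > 0`, then the
generalized eigenvector `u` is not square-summable. -/
theorem not_square_summable_of_liminf_S_pos
    (a b α : ℕ → ℝ) (ha : ∀ n, 0 < a n) (hα : ∀ n, 0 < α n)
    (lam : ℝ) (u : ℕ → ℝ) (hu : IsGenEig a b lam u)
    (S : ℕ → ℝ)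
    (hS : ∀ n : ℕ, S (n + 1) =
      a n * α n * u n ^ 2 + a (n + 1) * α (n + 1) * u (n + 1) ^ 2
        - (lam - b (n + 1)) * α n * u n * u (n + 1))
    (h1 : Tendsto a atTop atTop)
    (h6 : Tendsto (fun n => α n / α (n + 1) * (a (n + 1) / a n)) atTop (𝓝 1))
    (h7 : limsup (fun n => ((|b n| / a n : ℝ) : EReal)) atTop < ((2 : ℝ) : EReal))
    (h5 : ¬ Summable fun n : ℕ => 1 / (a n * α n))
    (hliminf : (0 : EReal) < liminf (fun n => (S n : EReal)) atTop) :
    ¬ Summable fun n => u n ^ 2 := by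
  obtain ⟨c, hc0, hc⟩ := EReal.lt_iff_exists_real_btwn.1 hliminf
  have hcpos : 0 < c := by exact_mod_cast hc0
  have eS : ∀ᶠ n in atTop, c < S (n + 1) := by
    have h := (tendsto_add_atTop_nat 1).eventually (eventually_lt_of_lt_liminf hc)
    filter_upwards [h] with n hn
    exact_mod_cast hn
  have eb : ∀ᶠ n in atTop, |b (n + 1)| / a (n + 1) < 2 := by
    have h := (tendsto_add_atTop_nat 1).eventually (eventually_lt_of_limsup_lt h7)
    filter_upwards [h] with n hn
    exact_mod_cast hn
  have ea : ∀ᶠ n in atTop, |lam| ≤ a (n + 1) :=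
    (tendsto_add_atTop_nat 1).eventually (h1.eventually_ge_atTop |lam|)
  have er : ∀ᶠ n in atTop, α n / α (n + 1) * (a (n + 1) / a n) < 2 :=
    h6.eventually_lt_const (by norm_num)
  intro hsum
  apply h5
  rw [← summable_nat_add_iff 1]
  have hsum2 : Summable fun n => 5 / c * (u (n + 1) ^ 2 + u (n + 2) ^ 2) :=
    (((summable_nat_add_iff 1).2 hsum).add ((summable_nat_add_iff 2).2 hsum)).mul_left _
  refine Summable.of_norm_bounded_eventually_nat hsum2 ?_
  filter_upwards [eS, eb, ea, er] with n hSn hbn han hrn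
  have hA := ha (n + 1)
  have hβ := hα (n + 1)
  have hAβ := mul_pos hA hβ
  rw [Real.norm_of_nonneg (by positivity), div_le_iff₀ hAβ, div_mul_eq_mul_div,
    div_mul_eq_mul_div, le_div_iff₀ hcpos, one_mul]
  rw [div_lt_iff₀ hA] at hbn
  have ht : |lam - b (n + 1)| ≤ 3 * a (n + 1) := by
    have := abs_sub lam (b (n + 1))
    linarith
  have hle := S_le (ha n) (hα n) hA hβ hrn.le ht (hu.2 n)
  rw [← hS n] at hle
  linarith
end
end

section
/- Let {s_n}_{n≥N} be a sequence of real numbers with s_n > 0 for all n ≥ N. If ∑_{n≥N} [ (s_{n+1} − s_n)/s_n ]⁻ < ∞, then liminf_{n→∞} s_n > 0. -/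
/-!
Write `a n` for the negative part of the `n`-th relative increment, so that
`s (N + n + 1) ≥ s (N + n) * (1 - a n)`. By summability there is an index `M` with
`∑ k, a (M + k) < 1/2`. The elementary inequality `(1 - S) * (1 - x) ≥ 1 - (S + x)` for `S, x ≥ 0`
then gives, by induction, `s (N + M + n) ≥ s (N + M) * (1 - ∑ k < n, a (M + k)) ≥ s (N + M) / 2`,
a positive lower bound for all large indices.
-/

open Filter

/-- If a sequence is eventually positive and the negative parts of its successive
relative increments are summable, then its lower limit is positive. -/
theorem liminf_pos_of_summable_neg_relative_increments
    (N : ℕ) (s : ℕ → ℝ) (hs : ∀ n, N ≤ n → 0 < s n)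
    (h : Summable fun n : ℕ => max (-((s (N + n + 1) - s (N + n)) / s (N + n))) 0) :
    (0 : EReal) < liminf (fun n => (s n : EReal)) atTop := by
  set a : ℕ → ℝ := fun n => max (-((s (N + n + 1) - s (N + n)) / s (N + n))) 0 with ha
  have ha0 : ∀ n, 0 ≤ a n := fun n => le_max_right _ _
  have hstep : ∀ n, s (N + n) * (1 - a n) ≤ s (N + n + 1) := by
    intro n
    have hp : 0 < s (N + n) := hs _ (by omega)
    have h1 : -((s (N + n + 1) - s (N + n)) / s (N + n)) ≤ a n := le_max_left _ _
    rw [← neg_div, div_le_iff₀ hp] at h1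
    linarith
  obtain ⟨M, hM⟩ : ∃ M, ∑' k, a (k + M) < 1 / 2 :=
    ((tendsto_sum_nat_add a).eventually_lt_const (by norm_num : (0 : ℝ) < 1 / 2)).exists
  have hS : ∀ n, ∑ k ∈ Finset.range n, a (k + M) < 1 / 2 := fun n =>
    (((summable_nat_add_iff M).2 h).sum_le_tsum _ fun k _ => ha0 _).trans_lt hM
  have hc : 0 < s (N + M) := hs _ (by omega)
  have hind : ∀ n, s (N + M) * (1 - ∑ k ∈ Finset.range n, a (k + M)) ≤ s (N + (n + M)) := by
    intro n
    induction n with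
    | zero => simp
    | succ n ih =>
      have hS0 : 0 ≤ ∑ k ∈ Finset.range n, a (k + M) := Finset.sum_nonneg fun k _ => ha0 _
      have hSn := hS (n + 1)
      rw [Finset.sum_range_succ] at hSn ⊢
      have han := ha0 (n + M)
      have h1 := mul_le_mul_of_nonneg_right ih (by linarith : 0 ≤ 1 - a (n + M))
      have h2 := hstep (n + M)
      have h3 := mul_nonneg hc.le (mul_nonneg hS0 han)
      rw [show N + (n + 1 + M) = N + (n + M) + 1 by omega]
      linarith
  have hlow : ∀ᶠ n in atTop, ((s (N + M) / 2 : ℝ) : EReal) ≤ (s n : EReal) := by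
    filter_upwards [eventually_ge_atTop (N + M)] with n hn
    have h1 := hind (n - (N + M))
    rw [show N + (n - (N + M) + M) = n by omega] at h1
    have h2 := mul_lt_mul_of_pos_left (hS (n - (N + M))) hc
    exact EReal.coe_le_coe_iff.2 (by linarith)
  exact (EReal.coe_pos.2 (half_pos hc)).trans_le (le_liminf_of_le (by isBoundedDefault) hlow)
end

section
/- Let {a_n} be positive reals, {b_n} real, and {α_n} positive reals satisfying conditions (a)–(g): (a) a_n → ∞; (b) ∑_{n≥1} [ (a_{n+1}/a_n)(α_{n+1}/α_n) − (a_n/a_{n−1})(α_{n−1}/α_n) ]⁻ < ∞; (c) ∑_{n≥1} (1/a_{n−1}) | a_{n−1}/a_n − α_{n−1}/α_n | < ∞; (d) ∑_{n≥1} | b_{n+1}/a_n − (b_n/a_{n−1})(α_{n−1}/α_n) | < ∞; (e) ∑_{n≥0} 1/(a_n α_n) = ∞; (f) (α_{n−1}/α_n)(a_n/a_{n−1}) → 1; (g) limsup_{n→∞} |b_n|/a_n < 2. Then for every λ ∈ ℝ and every generalized eigenvector {u_n} associated with λ, the sequence S_n = a_{n−1} α_{n−1} u_{n−1}² + a_n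 α_n u_n² − (λ − b_n) α_{n−1} u_{n−1} u_n satisfies liminf_{n→∞} S_n > 0. -/
/-!
Put `Tₙ = Sₙ₊₁`. Eliminating `uₙ` through the recurrence turns `Tₙ` into a quadratic form in
`(uₙ₊₁, uₙ₊₂)`:
`Tₙ = aₙ₊₁ αₙ₊₁ (uₙ₊₁² + r uₙ₊₂² - r p uₙ₊₁ uₙ₊₂)`, with `p = (lam - bₙ₊₁) / aₙ₊₁` and
`r = (αₙ / αₙ₊₁) (aₙ₊₁ / aₙ) → 1`. As `aₙ → ∞` and `limsup |bₙ| / aₙ < 2`, eventually `|p| ≤ q < 2`,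
so this form is uniformly positive definite: `Tₙ ≥ c aₙ₊₁ αₙ₊₁ (uₙ₊₁² + uₙ₊₂²)` with `c > 0`
(`form_lower_bound`).

Comparing with the definition of `Tₙ₊₁`, the `uₙ₊₁²` terms cancel (`step_identity`), and the
remaining coefficients are those of the summability hypotheses, whence
`Tₙ₊₁ - Tₙ ≥ -aₙ₊₁ αₙ₊₁ dₙ (uₙ₊₁² + uₙ₊₂²) ≥ -(dₙ / c) Tₙ` with `d` summable. A sequence that is
eventually positive and satisfies `Tₙ₊₁ ≥ (1 - eₙ) Tₙ` with `e` summable is bounded away from zero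
(`eventually_ge_of_step`).
-/

open Filter Topology

noncomputable section

lemma eventually_ge_of_step (T e : ℕ → ℝ) (he : ∀ n, 0 ≤ e n) (hs : Summable e)
    (hT : ∀ᶠ n in atTop, 0 < T n) (hstep : ∀ᶠ n in atTop, (1 - e n) * T n ≤ T (n + 1)) :
    ∃ m > 0, ∀ᶠ n in atTop, m ≤ T n := by
  have htail : ∀ᶠ N in atTop, ∑' k, e (k + N) < 1 / 2 :=
    (tendsto_sum_nat_add e).eventually_lt_const (by norm_num)
  obtain ⟨N, hN⟩ := eventually_atTop.1 (hT.and (hstep.and htail))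
  have hpos : 0 < T N := (hN N le_rfl).1
  have hsN : Summable fun k => e (k + N) := (summable_nat_add_iff N).2 hs
  have hpart : ∀ k, ∑ i ∈ Finset.range k, e (i + N) ≤ 1 / 2 := fun k =>
    (hsN.sum_le_tsum _ fun i _ => he _).trans (hN N le_rfl).2.2.le
  have hind : ∀ k, (1 - ∑ i ∈ Finset.range k, e (i + N)) * T N ≤ T (k + N) := by
    intro k
    induction k with
    | zero => simp
    | succ k ih =>
      have h1 := (hN (k + N) (by omega)).2.1
      have h2 := hpart (k + 1)
      rw [Finset.sum_range_succ] at h2 ⊢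
      have h0 : 0 ≤ ∑ i ∈ Finset.range k, e (i + N) := Finset.sum_nonneg fun i _ => he _
      have hk := he (k + N)
      have h3 := mul_le_mul_of_nonneg_left ih (show 0 ≤ 1 - e (k + N) by linarith)
      have h4 := mul_nonneg (mul_nonneg hk h0) hpos.le
      rw [show k + 1 + N = k + N + 1 by omega]
      linarith
  refine ⟨T N / 2, by positivity, eventually_atTop.2 ⟨N, fun n hn => ?_⟩⟩
  obtain ⟨k, rfl⟩ := Nat.exists_eq_add_of_le' hn
  have h1 := mul_le_mul_of_nonneg_right (hpart k) hpos.le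
  linarith [hind k]

lemma form_lower_bound {x y r p q : ℝ} (hq : q < 2) (hp : |p| ≤ q) (hr : |r - 1| ≤ (2 - q) / 8) :
    (2 - q) / 4 * (x ^ 2 + y ^ 2) ≤ x ^ 2 + r * y ^ 2 - r * p * (x * y) := by
  have hq0 : 0 ≤ q := (abs_nonneg p).trans hp
  obtain ⟨hr1, hr2⟩ := abs_le.1 hr
  have hr0 : 0 ≤ r := by linarith
  have hxy : |x * y| ≤ (x ^ 2 + y ^ 2) / 2 := by
    rw [abs_le]
    constructor <;> nlinarith [sq_nonneg (x - y), sq_nonneg (x + y)]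
  have h1 : r * p * (x * y) ≤ r * q * ((x ^ 2 + y ^ 2) / 2) := by
    calc r * p * (x * y) ≤ |r * p * (x * y)| := le_abs_self _
      _ = r * |p| * |x * y| := by rw [abs_mul, abs_mul, abs_of_nonneg hr0]
      _ ≤ _ := by gcongr
  have h2 : r * q ≤ (1 + (2 - q) / 8) * q := by gcongr; linarith
  have h3 := mul_le_mul_of_nonneg_right h2 (show 0 ≤ (x ^ 2 + y ^ 2) / 2 by positivity)
  have h4 := mul_le_mul_of_nonneg_right (show 1 - (2 - q) / 8 ≤ r by linarith) (sq_nonneg y)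
  -- the surplus is `(2 - q)² / 16 * (x² + y²) + (2 - q) / 8 * x²`
  nlinarith [mul_nonneg (sq_nonneg (2 - q)) (add_nonneg (sq_nonneg x) (sq_nonneg y)),
    mul_nonneg (sub_nonneg.2 hq.le) (sq_nonneg x)]

lemma form_identity {a₀ a₁ α₀ α₁ l u₀ x y : ℝ} (ha₀ : 0 < a₀) (ha₁ : 0 < a₁) (hα₁ : 0 < α₁)
    (h : a₁ * y = l * x - a₀ * u₀) :
    a₀ * α₀ * u₀ ^ 2 + a₁ * α₁ * x ^ 2 - l * α₀ * u₀ * x =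
      a₁ * α₁ * (x ^ 2 + α₀ / α₁ * (a₁ / a₀) * y ^ 2
        - α₀ / α₁ * (a₁ / a₀) * (l / a₁) * (x * y)) := by
  obtain rfl : u₀ = (l * x - a₁ * y) / a₀ := by
    rw [eq_div_iff ha₀.ne']; linarith
  field_simp
  ring

lemma step_identity {a₀ a₁ a₂ α₀ α₁ α₂ b₁ b₂ lam x y : ℝ} (ha₀ : 0 < a₀) (ha₁ : 0 < a₁)
    (hα₁ : 0 < α₁) :
    a₁ * α₁ * x ^ 2 + a₂ * α₂ * y ^ 2 - (lam - b₂) * α₁ * x * y =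
      a₁ * α₁ * (x ^ 2 + α₀ / α₁ * (a₁ / a₀) * y ^ 2
        - α₀ / α₁ * (a₁ / a₀) * ((lam - b₁) / a₁) * (x * y))
      + a₁ * α₁ * ((a₂ / a₁ * (α₂ / α₁) - a₁ / a₀ * (α₀ / α₁)) * y ^ 2
        - (lam * (1 / a₀ * (a₀ / a₁ - α₀ / α₁)) - (b₂ / a₁ - b₁ / a₀ * (α₀ / α₁))) * (x * y)) := by
  field_simp
  ring

lemma perturbation_bound {A B C lam x y : ℝ} :
    -((max (-A) 0 + |lam| * |C| + |B|) * (x ^ 2 + y ^ 2)) ≤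
      A * y ^ 2 - (lam * C - B) * (x * y) := by
  have hxy : |x * y| ≤ x ^ 2 + y ^ 2 := by
    rw [abs_le]
    constructor <;> nlinarith [sq_nonneg (x - y), sq_nonneg (x + y), sq_nonneg x, sq_nonneg y]
  have h1 : (lam * C - B) * (x * y) ≤ (|lam| * |C| + |B|) * (x ^ 2 + y ^ 2) := by
    calc (lam * C - B) * (x * y) ≤ |lam * C - B| * |x * y| := by
          rw [← abs_mul]; exact le_abs_self _
      _ ≤ (|lam| * |C| + |B|) * (x ^ 2 + y ^ 2) := by
          have := abs_sub (lam * C) B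
          rw [abs_mul] at this
          gcongr
  have h2 : -A * y ^ 2 ≤ max (-A) 0 * y ^ 2 := by gcongr; exact le_max_left _ _
  have h3 : 0 ≤ max (-A) 0 * x ^ 2 := mul_nonneg (le_max_right _ _) (sq_nonneg x)
  linarith

lemma IsGenEig.not_both_zero {a b u : ℕ → ℝ} {lam : ℝ} (ha : ∀ n, 0 < a n)
    (hu : IsGenEig a b lam u) (n : ℕ) : ¬(u n = 0 ∧ u (n + 1) = 0) := by
  induction n with
  | zero => exact hu.1
  | succ n ih =>
    rintro ⟨h1, h2⟩
    have h := hu.2 n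
    rw [show u (n + 2) = 0 from h2, h1] at h
    have : a n * u n = 0 := by linarith
    exact ih ⟨(mul_eq_zero.1 this).resolve_left (ha n).ne', h1⟩

/-- Under conditions (a)–(g), for every generalized eigenvector the associated
sequence `Sₙ` satisfies `liminf Sₙ > 0`. -/
theorem liminf_S_pos
    (a b α : ℕ → ℝ) (ha : ∀ n, 0 < a n) (hα : ∀ n, 0 < α n)
    (h1 : Tendsto a atTop atTop)
    (h2 : Summable fun n : ℕ =>
      max (-(a (n + 2) / a (n + 1) * (α (n + 2) / α (n + 1))
            - a (n + 1) / a n * (α n / α (n + 1)))) 0)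
    (h3 : Summable fun n : ℕ => 1 / a n * |a n / a (n + 1) - α n / α (n + 1)|)
    (h4 : Summable fun n : ℕ => |b (n + 2) / a (n + 1) - b (n + 1) / a n * (α n / α (n + 1))|)
    (h5 : ¬ Summable fun n : ℕ => 1 / (a n * α n))
    (h6 : Tendsto (fun n => α n / α (n + 1) * (a (n + 1) / a n)) atTop (𝓝 1))
    (h7 : limsup (fun n => ((|b n| / a n : ℝ) : EReal)) atTop < ((2 : ℝ) : EReal))
    (lam : ℝ) (u : ℕ → ℝ) (hu : IsGenEig a b lam u)
    (S : ℕ → ℝ)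
    (hS : ∀ n : ℕ, S (n + 1) =
      a n * α n * u n ^ 2 + a (n + 1) * α (n + 1) * u (n + 1) ^ 2
        - (lam - b (n + 1)) * α n * u n * u (n + 1)) :
    (0 : EReal) < liminf (fun n => (S n : EReal)) atTop := by
  obtain ⟨q₀, hq₀, hq₀2⟩ := EReal.lt_iff_exists_real_btwn.1 h7
  have hq₀2 : q₀ < 2 := by exact_mod_cast hq₀2
  have hb : ∀ᶠ n in atTop, |b n| / a n < q₀ := by
    filter_upwards [eventually_lt_of_limsup_lt hq₀] with n hn
    exact_mod_cast hn
  have hl : ∀ᶠ n in atTop, |lam| / a n < (2 - q₀) / 2 :=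
    (h1.const_div_atTop |lam|).eventually_lt_const (by linarith)
  -- the midpoint of `q₀` and `2`: the room left over absorbs `|lam| / a n`
  set q : ℝ := (q₀ + 2) / 2 with hqdef
  have hq : q < 2 := by linarith
  have hp : ∀ᶠ n in atTop, |(lam - b n) / a n| ≤ q := by
    filter_upwards [hb, hl] with n hn hn'
    rw [abs_div, abs_of_pos (ha n)]
    calc |lam - b n| / a n ≤ (|lam| + |b n|) / a n := by
          have := abs_sub lam (b n)
          have := (ha n).le
          gcongr
      _ = |lam| / a n + |b n| / a n := add_div _ _ _
      _ ≤ q := by linarith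
  have hr : ∀ᶠ n in atTop, |α n / α (n + 1) * (a (n + 1) / a n) - 1| ≤ (2 - q) / 8 := by
    filter_upwards [h6.eventually (Metric.closedBall_mem_nhds 1
      (show 0 < (2 - q) / 8 by linarith))] with n hn
    simpa [Real.dist_eq] using hn
  have hT : ∀ n, S (n + 1) = a (n + 1) * α (n + 1) * (u (n + 1) ^ 2
      + α n / α (n + 1) * (a (n + 1) / a n) * u (n + 2) ^ 2
      - α n / α (n + 1) * (a (n + 1) / a n) * ((lam - b (n + 1)) / a (n + 1))
        * (u (n + 1) * u (n + 2))) := fun n => by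
    rw [hS n]
    exact form_identity (ha n) (ha (n + 1)) (hα (n + 1)) (hu.2 n)
  have hlow : ∀ᶠ n in atTop, (2 - q) / 4 * (a (n + 1) * α (n + 1)
      * (u (n + 1) ^ 2 + u (n + 2) ^ 2)) ≤ S (n + 1) := by
    filter_upwards [(tendsto_add_atTop_nat 1).eventually hp, hr] with n hpn hrn
    rw [hT n]
    have := mul_le_mul_of_nonneg_left
      (form_lower_bound (x := u (n + 1)) (y := u (n + 2)) hq hpn hrn)
      (mul_pos (ha (n + 1)) (hα (n + 1))).le
    linarith
  set d : ℕ → ℝ := fun n =>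
    max (-(a (n + 2) / a (n + 1) * (α (n + 2) / α (n + 1))
            - a (n + 1) / a n * (α n / α (n + 1)))) 0
      + |lam| * |1 / a n * (a n / a (n + 1) - α n / α (n + 1))|
      + |b (n + 2) / a (n + 1) - b (n + 1) / a n * (α n / α (n + 1))| with hd
  have hd0 : ∀ n, 0 ≤ d n := fun n => by
    have := le_max_right (-(a (n + 2) / a (n + 1) * (α (n + 2) / α (n + 1))
            - a (n + 1) / a n * (α n / α (n + 1)))) 0
    simp only [hd]
    positivity
  have hds : Summable d := by
    refine (h2.add (Summable.mul_left |lam| ?_)).add h4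
    refine h3.congr fun n => ?_
    rw [abs_mul, abs_of_pos (one_div_pos.2 (ha n))]
  have hpos : ∀ n, 0 < a (n + 1) * α (n + 1) * (u (n + 1) ^ 2 + u (n + 2) ^ 2) := fun n => by
    refine mul_pos (mul_pos (ha _) (hα _)) ?_
    rcases not_and_or.1 (hu.not_both_zero ha (n + 1)) with h | h
    · exact add_pos_of_pos_of_nonneg (sq_pos_iff.2 h) (sq_nonneg _)
    · exact add_pos_of_nonneg_of_pos (sq_nonneg _) (sq_pos_iff.2 h)
  have hc : 0 < (2 - q) / 4 := by linarith
  obtain ⟨m, hm, hmS⟩ := eventually_ge_of_step (fun n => S (n + 1)) (fun n => d n / ((2 - q) / 4))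
    (fun n => div_nonneg (hd0 n) hc.le) (hds.div_const _)
    (by
      filter_upwards [hlow] with n hn
      exact (mul_pos hc (hpos n)).trans_le hn)
    (by
      filter_upwards [hlow] with n hn
      have hstep := step_identity (a₂ := a (n + 2)) (α₀ := α n) (α₂ := α (n + 2))
        (b₁ := b (n + 1)) (b₂ := b (n + 2)) (lam := lam) (x := u (n + 1)) (y := u (n + 2))
        (ha n) (ha (n + 1)) (hα (n + 1))
      rw [← hT n, ← hS (n + 1)] at hstep
      have hpert := mul_le_mul_of_nonneg_left (perturbation_bound
        (A := a (n + 2) / a (n + 1) * (α (n + 2) / α (n + 1))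
            - a (n + 1) / a n * (α n / α (n + 1)))
        (B := b (n + 2) / a (n + 1) - b (n + 1) / a n * (α n / α (n + 1)))
        (C := 1 / a n * (a n / a (n + 1) - α n / α (n + 1)))
        (lam := lam) (x := u (n + 1)) (y := u (n + 2)))
        (mul_pos (ha (n + 1)) (hα (n + 1))).le
      have hscale := mul_le_mul_of_nonneg_left hn (div_nonneg (hd0 n) hc.le)
      rw [← mul_assoc, div_mul_cancel₀ _ hc.ne'] at hscale
      change _ ≤ S (n + 1 + 1)
      have hpert' : -(d n * (a (n + 1) * α (n + 1) * (u (n + 1) ^ 2 + u (n + 2) ^ 2))) ≤ _ :=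
        le_trans (le_of_eq (by simp only [hd]; ring)) hpert
      linarith)
  refine lt_of_lt_of_le (b := (m : EReal)) (by exact_mod_cast hm) ?_
  refine le_liminf_of_le (by isBoundedDefault) ?_
  obtain ⟨N, hN⟩ := eventually_atTop.1 hmS
  filter_upwards [eventually_ge_atTop (N + 1)] with n hn
  obtain ⟨k, rfl⟩ := Nat.exists_eq_add_of_le' (show 1 ≤ n by omega)
  exact_mod_cast hN k (by omega)
end
end

section
/- Let {a_n} be positive reals, {b_n} real, and {α_n} positive reals satisfying: (a) a_n → ∞; (b') ∑_{n≥1} | (a_{n+1}/a_n)(α_{n+1}/α_n) − (a_n/a_{n−1})(α_{n−1}/α_n) | < ∞; (c) ∑_{n≥1} (1/a_{n−1}) | a_{n−1}/a_n − α_{n−1}/α_n | < ∞; (d) ∑_{n≥1} | b_{n+1}/a_n − (b_n/a_{n−1})(α_{n−1}/α_n) | < ∞; (e) ∑_{n≥0} 1/(a_n α_n) = ∞; (f) (α_{n−1}/α_n)(a_n/a_{n−1}) → 1; (g) limsup_{n→∞} |b_n|/a_n < 2. Then for every λ ∈ ℝ and every generalized eigenvector {u_n} associated with λ there exist constants c₁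 > 0, c₂ > 0 and N ∈ ℕ such that for all n ≥ N: c₁/(a_n α_n) ≤ u_n² + u_{n+1}² ≤ c₂/(a_n α_n). -/
/-!
Put `t n = lam - b n` and consider, with indices shifted by one, the quadratic form
`T n = α (n+1) a (n+1) u (n+1)² - α (n+1) t (n+2) u (n+1) u (n+2) + (α n / a n) a (n+1)² u (n+2)²`.

* Divided by `a (n+1) α (n+1)`, it is `x² - τ x y + ρ y²` in `x = u (n+1)`, `y = u (n+2)`, where `ρ → 1`
  by `h6`. Hypotheses `h2` and `h6` force `a (n+1) / a n → 1`, so `|τ|` stays eventually below a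
  constant smaller than `2` by `h1` and `h7`. Hence `T n` is comparable with
  `a (n+1) α (n+1) (u (n+1)² + u (n+2)²)`.
* The recurrence gives a closed form for `T (n+1) - T n` (`form_step`) whose coefficients are exactly the
  quantities in `h2`, `h3`, `h4`. So `|T (n+1) - T n| ≤ η n * T (n+1)` with `η` summable.
* Such a positive sequence has summable logarithmic increments, so it converges to a positive limit
  (`exists_pos_limit`), and the two-sided bound follows.
-/

open Filter Topology

noncomputable section

theorem genEig_sq_pos {a b u : ℕ → ℝ} {lam : ℝ} (ha : ∀ n, 0 < a n) (hu : IsGenEig a b lam u)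
    (n : ℕ) : 0 < u n ^ 2 + u (n + 1) ^ 2 := by
  induction n with
  | zero =>
    rcases eq_or_ne (u 0) 0 with h | h
    · have h' : u 1 ≠ 0 := fun h' => hu.1 ⟨h, h'⟩
      positivity
    · positivity
  | succ n ih =>
    rcases eq_or_ne (u (n + 1)) 0 with h | h
    · have hr := hu.2 n
      rw [h] at ih hr
      have h' : u (n + 2) ≠ 0 := by
        intro h'
        rw [h'] at hr
        have h0 : a n * u n = 0 := by linarith
        have : u n = 0 := (mul_eq_zero.mp h0).resolve_left (ha n).ne'
        simp [this] at ih
      have : 0 < u (n + 1 + 1) ^ 2 := by positivity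
      positivity
    · positivity

/-- An eventually positive sequence whose increments are summable relative to its own size converges
to a positive limit: its logarithm has summable increments. -/
theorem exists_pos_limit {T η : ℕ → ℝ} (hη : Summable η) (hpos : ∀ᶠ n in atTop, 0 < T n)
    (hstep : ∀ᶠ n in atTop, |T (n + 1) - T n| ≤ η n * T (n + 1)) :
    ∃ L > 0, Tendsto T atTop (𝓝 L) := by
  have hsmall : ∀ᶠ n in atTop, η n < 1 / 2 :=
    hη.tendsto_atTop_zero.eventually_lt_const (by norm_num)
  obtain ⟨N, hN⟩ := eventually_atTop.mp (hpos.and (hstep.and hsmall))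
  have hlog : ∀ n, dist (Real.log (T (n + N))) (Real.log (T (n + 1 + N))) ≤ 2 * η (n + N) := by
    intro n
    obtain ⟨h0, h1, h2⟩ := hN (n + N) (by omega)
    obtain ⟨h0', -, -⟩ := hN (n + N + 1) (by omega)
    rw [show n + 1 + N = n + N + 1 by ring]
    generalize n + N = m at *
    have hη0 : 0 ≤ η m := by
      by_contra! h
      nlinarith [abs_nonneg (T (m + 1) - T m), mul_neg_of_neg_of_pos h h0']
    rw [abs_le] at h1
    have e1 : T m / T (m + 1) ≤ 1 + η m := by rw [div_le_iff₀ h0']; linarith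
    have e2 : T (m + 1) / T m ≤ 1 + 2 * η m := by
      rw [div_le_iff₀ h0]
      nlinarith [mul_nonneg hη0 h0'.le, mul_nonneg hη0 (mul_nonneg h0'.le (sub_nonneg.2 h2.le))]
    have l1 := Real.log_le_sub_one_of_pos (div_pos h0 h0')
    have l2 := Real.log_le_sub_one_of_pos (div_pos h0' h0)
    rw [Real.log_div h0.ne' h0'.ne'] at l1
    rw [Real.log_div h0'.ne' h0.ne'] at l2
    rw [Real.dist_eq, abs_le]
    constructor <;> linarith
  have hc : CauchySeq fun n => Real.log (T (n + N)) :=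
    cauchySeq_of_dist_le_of_summable _ hlog (((summable_nat_add_iff N).2 hη).mul_left 2)
  obtain ⟨l, hl⟩ := cauchySeq_tendsto_of_complete hc
  refine ⟨Real.exp l, Real.exp_pos l, (tendsto_add_atTop_iff_nat N).1 ?_⟩
  refine ((Real.continuous_exp.tendsto l).comp hl).congr fun n => ?_
  exact Real.exp_log (hN (n + N) (by omega)).1

/-- The quadratic form in `(u (n+1), u (n+2))` that is almost conserved along a generalized
eigenvector. -/
def eigForm (a b α u : ℕ → ℝ) (lam : ℝ) (n : ℕ) : ℝ :=
  α (n + 1) * a (n + 1) * u (n + 1) ^ 2 - α (n + 1) * (lam - b (n + 2)) * u (n + 1) * u (n + 2)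
    + α n / a n * a (n + 1) ^ 2 * u (n + 2) ^ 2

theorem eigForm_eq {a α : ℕ → ℝ} (b u : ℕ → ℝ) (lam : ℝ) (ha : ∀ n, 0 < a n) (hα : ∀ n, 0 < α n)
    (n : ℕ) :
    eigForm a b α u lam n = a (n + 1) * α (n + 1) *
      (u (n + 1) ^ 2 - (lam - b (n + 2)) / a (n + 1) * (u (n + 1) * u (n + 2))
        + α n / α (n + 1) * (a (n + 1) / a n) * u (n + 2) ^ 2) := by
  have := (ha n).ne'
  have := (ha (n + 1)).ne'
  have := (hα (n + 1)).ne'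
  unfold eigForm
  field_simp

/-- The increment of the form; the identity rests on
`x² - t u x = y² - t u y` whenever `x + y = t u`, applied to `x = a (n+1) u (n+1)` and
`y = a (n+2) u (n+3)`. -/
theorem form_step {a b α u : ℕ → ℝ} {lam : ℝ} (ha : ∀ n, 0 < a n) (hα : ∀ n, 0 < α n)
    (hu : IsGenEig a b lam u) (n : ℕ) :
    eigForm a b α u lam (n + 1) - eigForm a b α u lam n =
      a (n + 1) * α (n + 1) * ((a (n + 2) / a (n + 1) * (α (n + 2) / α (n + 1))
        - a (n + 1) / a n * (α n / α (n + 1))) * u (n + 2) ^ 2)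
      + a (n + 2) * α (n + 2) * (((b (n + 3) / a (n + 2)
          - b (n + 2) / a (n + 1) * (α (n + 1) / α (n + 2)))
        - lam * (1 / a (n + 1) * (a (n + 1) / a (n + 2) - α (n + 1) / α (n + 2))))
        * (u (n + 2) * u (n + 3))) := by
  have h0 := (ha n).ne'
  have h1 := (ha (n + 1)).ne'
  have h2 := (ha (n + 2)).ne'
  have h3 := (hα (n + 1)).ne'
  have h4 := (hα (n + 2)).ne'
  have hr : a (n + 2) * u (n + 3) = (lam - b (n + 2)) * u (n + 2) - a (n + 1) * u (n + 1) :=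
    hu.2 (n + 1)
  have key : a (n + 1) ^ 2 * u (n + 1) ^ 2 - (lam - b (n + 2)) * u (n + 2) * (a (n + 1) * u (n + 1))
      = (a (n + 2) * u (n + 3)) ^ 2 - (lam - b (n + 2)) * u (n + 2) * (a (n + 2) * u (n + 3)) := by
    rw [hr]; ring
  have key' : α (n + 1) * a (n + 1) * u (n + 1) ^ 2
      - α (n + 1) * (lam - b (n + 2)) * u (n + 1) * u (n + 2)
      = α (n + 1) / a (n + 1) * ((a (n + 2) * u (n + 3)) ^ 2
        - (lam - b (n + 2)) * u (n + 2) * (a (n + 2) * u (n + 3))) := by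
    rw [← key]; field_simp
  unfold eigForm
  rw [key']
  simp only [show n + 1 + 1 = n + 2 from rfl, show n + 1 + 2 = n + 3 from rfl]
  field_simp
  ring

/-- Both `a n` and `a n * α n` have ratios tending to `1`: by `h2` and `h6` the ratio of `a n * α n`
tends to `1`, and its product with the quantity in `h6` is the square of the ratio of `a n`. -/
theorem ratio_limits {a α : ℕ → ℝ} (ha : ∀ n, 0 < a n) (hα : ∀ n, 0 < α n)
    (h2 : Summable fun n : ℕ =>
      |a (n + 2) / a (n + 1) * (α (n + 2) / α (n + 1))
        - a (n + 1) / a n * (α n / α (n + 1))|)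
    (h6 : Tendsto (fun n => α n / α (n + 1) * (a (n + 1) / a n)) atTop (𝓝 1)) :
    Tendsto (fun n => a (n + 2) / a (n + 1)) atTop (𝓝 1) ∧
      Tendsto (fun n => a (n + 2) / a (n + 1) * (α (n + 2) / α (n + 1))) atTop (𝓝 1) := by
  have hG : Tendsto (fun n => a (n + 2) / a (n + 1) * (α (n + 2) / α (n + 1))) atTop (𝓝 1) := by
    have h := ((tendsto_zero_iff_abs_tendsto_zero _).2 h2.tendsto_atTop_zero).add h6
    rw [zero_add] at h
    exact h.congr fun n => by ring
  refine ⟨?_, hG⟩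
  have h := (hG.mul (h6.comp (tendsto_add_atTop_nat 1))).sqrt
  rw [mul_one, Real.sqrt_one] at h
  refine h.congr fun n => ?_
  have e1 := ha (n + 1)
  have e2 := ha (n + 2)
  have e3 := hα (n + 1)
  have e4 := hα (n + 2)
  rw [Real.sqrt_eq_iff_mul_self_eq_of_pos (by positivity)]
  simp only [Function.comp, show n + 1 + 1 = n + 2 from rfl]
  field_simp

/-- Remark 6: under (a), (b′), (c)–(g), every generalized eigenvector satisfies the
two-sided bound `c₁/(aₙαₙ) ≤ uₙ² + uₙ₊₁² ≤ c₂/(aₙαₙ)` eventually. -/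
theorem genEigenvector_two_sided_bound
    (a b α : ℕ → ℝ) (ha : ∀ n, 0 < a n) (hα : ∀ n, 0 < α n)
    (h1 : Tendsto a atTop atTop)
    (h2 : Summable fun n : ℕ =>
      |a (n + 2) / a (n + 1) * (α (n + 2) / α (n + 1))
        - a (n + 1) / a n * (α n / α (n + 1))|)
    (h3 : Summable fun n : ℕ => 1 / a n * |a n / a (n + 1) - α n / α (n + 1)|)
    (h4 : Summable fun n : ℕ => |b (n + 2) / a (n + 1) - b (n + 1) / a n * (α n / α (n + 1))|)
    (h5 : ¬ Summable fun n : ℕ => 1 / (a n * α n))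
    (h6 : Tendsto (fun n => α n / α (n + 1) * (a (n + 1) / a n)) atTop (𝓝 1))
    (h7 : limsup (fun n => ((|b n| / a n : ℝ) : EReal)) atTop < ((2 : ℝ) : EReal)) :
    ∀ (lam : ℝ) (u : ℕ → ℝ), IsGenEig a b lam u →
      ∃ c₁ > (0 : ℝ), ∃ c₂ > (0 : ℝ), ∃ N : ℕ, ∀ n ≥ N,
        c₁ / (a n * α n) ≤ u n ^ 2 + u (n + 1) ^ 2 ∧
        u n ^ 2 + u (n + 1) ^ 2 ≤ c₂ / (a n * α n) := by
  intro lam u hu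
  obtain ⟨hr, hG⟩ := ratio_limits ha hα h2 h6
  obtain ⟨q, hq1, hq2⟩ := EReal.lt_iff_exists_real_btwn.1 h7
  have hq2 : q < 2 := EReal.coe_lt_coe_iff.1 hq2
  have hb : ∀ᶠ n in atTop, |b n| / a n < q := by
    filter_upwards [eventually_lt_of_limsup_lt hq1] with n hn
    exact EReal.coe_lt_coe_iff.1 hn
  -- `c` is the coercivity constant of the form; it satisfies `q < 2 - 4 * c`.
  obtain ⟨c, hc⟩ : ∃ c, c = (2 - q) / 8 := ⟨_, rfl⟩
  have hc0 : 0 < c := by linarith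
  have hτ : ∀ᶠ n in atTop, |(lam - b (n + 2)) / a (n + 1)| < 2 - 4 * c := by
    have hlim : Tendsto (fun n => |lam| / a (n + 1) + q * (a (n + 2) / a (n + 1))) atTop
        (𝓝 (0 + q * 1)) :=
      ((h1.comp (tendsto_add_atTop_nat 1)).const_div_atTop |lam|).add (hr.const_mul q)
    filter_upwards [hlim.eventually_lt_const (show 0 + q * 1 < 2 - 4 * c by linarith),
      (tendsto_add_atTop_nat 2).eventually hb] with n hn hbn
    refine lt_of_le_of_lt ?_ hn
    have e1 := ha (n + 1)
    have e2 := ha (n + 2)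
    rw [abs_div, abs_of_pos e1, ← mul_div_assoc, ← add_div]
    rw [div_lt_iff₀ e2] at hbn
    gcongr
    linarith [abs_sub lam (b (n + 2))]
  have hlow : ∀ᶠ n in atTop, c * (a (n + 1) * α (n + 1) * (u (n + 1) ^ 2 + u (n + 2) ^ 2))
      ≤ eigForm a b α u lam n := by
    filter_upwards [hτ, h6.eventually_const_lt (show 1 - c < 1 by linarith)] with n hn hρ
    rw [eigForm_eq b u lam ha hα n, mul_left_comm c]
    refine mul_le_mul_of_nonneg_left ?_ (mul_pos (ha _) (hα _)).le
    rw [abs_lt] at hn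
    generalize (lam - b (n + 2)) / a (n + 1) = τ at *
    generalize α n / α (n + 1) * (a (n + 1) / a n) = ρ at *
    generalize u (n + 1) = x at *
    generalize u (n + 2) = y at *
    nlinarith [mul_nonneg (sub_nonneg.2 hn.1.le) (sq_nonneg (x - y)),
      mul_nonneg (sub_nonneg.2 hn.2.le) (sq_nonneg (x + y)),
      mul_nonneg (sub_nonneg.2 hρ.le) (sq_nonneg y), mul_nonneg hc0.le (sq_nonneg x)]
  have hupp : ∀ᶠ n in atTop, eigForm a b α u lam n
      ≤ 3 * (a (n + 1) * α (n + 1) * (u (n + 1) ^ 2 + u (n + 2) ^ 2)) := by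
    filter_upwards [hτ, h6.eventually_lt_const (show (1 : ℝ) < 2 by norm_num)] with n hn hρ
    rw [eigForm_eq b u lam ha hα n, mul_left_comm 3]
    refine mul_le_mul_of_nonneg_left ?_ (mul_pos (ha _) (hα _)).le
    have hn := hn.trans (show 2 - 4 * c < 2 by linarith)
    rw [abs_lt] at hn
    generalize (lam - b (n + 2)) / a (n + 1) = τ at *
    generalize α n / α (n + 1) * (a (n + 1) / a n) = ρ at *
    generalize u (n + 1) = x at *
    generalize u (n + 2) = y at *
    nlinarith [mul_nonneg (sub_nonneg.2 hn.1.le) (sq_nonneg (x + y)),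
      mul_nonneg (sub_nonneg.2 hn.2.le) (sq_nonneg (x - y)),
      mul_nonneg (sub_nonneg.2 hρ.le) (sq_nonneg y), sq_nonneg x, sq_nonneg y]
  have hpos : ∀ᶠ n in atTop, 0 < eigForm a b α u lam n := by
    filter_upwards [hlow] with n hn
    exact lt_of_lt_of_le
      (mul_pos hc0 (mul_pos (mul_pos (ha _) (hα _)) (genEig_sq_pos ha hu (n + 1)))) hn
  have hη := (((h2.mul_left 2).add ((summable_nat_add_iff 1).2 h4)).add
    (((summable_nat_add_iff 1).2 h3).mul_left |lam|)).div_const c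
  have hstep : ∀ᶠ n in atTop, |eigForm a b α u lam (n + 1) - eigForm a b α u lam n|
      ≤ (2 * |a (n + 2) / a (n + 1) * (α (n + 2) / α (n + 1))
            - a (n + 1) / a n * (α n / α (n + 1))|
          + |b (n + 3) / a (n + 2) - b (n + 2) / a (n + 1) * (α (n + 1) / α (n + 2))|
          + |lam| * (1 / a (n + 1) * |a (n + 1) / a (n + 2) - α (n + 1) / α (n + 2)|)) / c
        * eigForm a b α u lam (n + 1) := by
    filter_upwards [(tendsto_add_atTop_nat 1).eventually hlow,
      hG.eventually_const_lt (show (1 / 2 : ℝ) < 1 by norm_num)] with n hl hg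
    have g1 := mul_pos (ha (n + 1)) (hα (n + 1))
    have g2 := mul_pos (ha (n + 2)) (hα (n + 2))
    have hg' : a (n + 1) * α (n + 1) ≤ 2 * (a (n + 2) * α (n + 2)) := by
      rw [div_mul_div_comm, lt_div_iff₀ g1] at hg
      linarith
    have e3 : 1 / a (n + 1) * |a (n + 1) / a (n + 2) - α (n + 1) / α (n + 2)|
        = |1 / a (n + 1) * (a (n + 1) / a (n + 2) - α (n + 1) / α (n + 2))| := by
      rw [abs_mul, abs_of_pos (one_div_pos.2 (ha (n + 1)))]
    rw [form_step ha hα hu n, e3, ← abs_mul]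
    simp only [show n + 1 + 1 = n + 2 from rfl, show n + 1 + 2 = n + 3 from rfl] at hl
    generalize eigForm a b α u lam (n + 1) = F at *
    generalize a (n + 2) / a (n + 1) * (α (n + 2) / α (n + 1))
            - a (n + 1) / a n * (α n / α (n + 1)) = A
    generalize b (n + 3) / a (n + 2) - b (n + 2) / a (n + 1) * (α (n + 1) / α (n + 2)) = B
    generalize lam * (1 / a (n + 1) * (a (n + 1) / a (n + 2) - α (n + 1) / α (n + 2))) = C
    generalize a (n + 1) * α (n + 1) = g at *
    generalize a (n + 2) * α (n + 2) = h at *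
    generalize u (n + 2) = x at *
    generalize u (n + 3) = y at *
    rw [← le_div_iff₀' hc0] at hl
    have hxy : |x * y| ≤ x ^ 2 + y ^ 2 := by
      rw [abs_le]
      constructor <;> nlinarith [sq_nonneg (x - y), sq_nonneg (x + y), sq_nonneg x, sq_nonneg y]
    calc |g * (A * x ^ 2) + h * ((B - C) * (x * y))|
        ≤ |g * (A * x ^ 2)| + |h * ((B - C) * (x * y))| := abs_add_le _ _
      _ = g * (|A| * x ^ 2) + h * (|B - C| * |x * y|) := by
          simp only [abs_mul, abs_of_pos g1, abs_of_pos g2, abs_of_nonneg (sq_nonneg x)]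
      _ ≤ 2 * h * (|A| * (x ^ 2 + y ^ 2)) + h * ((|B| + |C|) * (x ^ 2 + y ^ 2)) := by
          gcongr
          · linarith [sq_nonneg y]
          · exact abs_sub B C
      _ = (2 * |A| + |B| + |C|) * (h * (x ^ 2 + y ^ 2)) := by ring
      _ ≤ (2 * |A| + |B| + |C|) * (F / c) := by gcongr
      _ = (2 * |A| + |B| + |C|) / c * F := by ring
  obtain ⟨L, hL, hT⟩ := exists_pos_limit hη hpos hstep
  have hfin : ∀ᶠ n in atTop, L / 6 / (a (n + 1) * α (n + 1)) ≤ u (n + 1) ^ 2 + u (n + 2) ^ 2 ∧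
      u (n + 1) ^ 2 + u (n + 2) ^ 2 ≤ 2 * L / c / (a (n + 1) * α (n + 1)) := by
    filter_upwards [hlow, hupp, hT.eventually_const_lt (show L / 2 < L by linarith),
      hT.eventually_lt_const (show L < 2 * L by linarith)] with n e1 e2 e3 e4
    have hg := mul_pos (ha (n + 1)) (hα (n + 1))
    rw [div_le_iff₀ hg, le_div_iff₀ hg, le_div_iff₀ hc0]
    constructor <;> linarith
  obtain ⟨N, hN⟩ := eventually_atTop.1 hfin
  refine ⟨L / 6, by positivity, 2 * L / c, by positivity, N + 1, fun n hn => ?_⟩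
  obtain ⟨m, rfl⟩ : ∃ m, n = m + 1 := ⟨n - 1, by omega⟩
  exact hN m (by omega)
end
end

section
/- Let C be a Jacobi matrix with weights {a_n} and diagonal {b_n}. Assume: (a) a_n → ∞; (b) ∑_{n≥0} 1/a_n = ∞; (c) the sequences {a_{n−1}/a_n}, {1/a_n} and {b_n/a_n} are of bounded variation (i.e., ∑_n of the absolute values of consecutive differences is finite); (d) lim_{n→∞} |b_n|/a_n < 2. Then C is self-adjoint, σ_p(C) = ∅, and σ(C) = ℝ. -/
/-!
For real `l`, a solution `u` of `aₙuₙ + (bₙ₊₁ - l)uₙ₊₁ + aₙ₊₁uₙ₊₂ = 0` is controlled by the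
Turán-type form `Sₙ = aₙ(uₙ₊₁² - uₙuₙ₊₂)`. With `βₙ = aₙ/aₙ₊₁` and `αₙ = (l - bₙ₊₁)/aₙ₊₁` it equals
`aₙ(βₙuₙ² - αₙuₙuₙ₊₁ + uₙ₊₁²)`, and
`Sₙ₊₁ - Sₙ = aₙ₊₁((βₙ₊₁ - βₙ)uₙ₊₁² - (αₙ₊₁ - αₙ)uₙ₊₁uₙ₊₂)`.
Since `βₙ → 1` and `lim |αₙ| < 2`, the form is eventually comparable to `aₙ(uₙ² + uₙ₊₁²)`; bounded
variation then keeps `Sₙ` away from zero, so that `uₙ² + uₙ₊₁² ≥ c/aₙ` is not summable unless `u = 0`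
(`real_solution_eq_zero`). Hence a real `l` is no eigenvalue, and `(1, 0, 0, …)` is not in the
range of `C - l`, because a preimage would be a square-summable solution of the same recurrence.

Self-adjointness is Carleman's argument: the boundary terms in the discrete Green identity (`green`)
converge, and after division by `aₙ` they are summable, so the limit is `0` because `∑ 1/aₙ = ∞`.

For nonreal `l`, injectivity follows from symmetry. For surjectivity, the solutions of `(C - l)x = y`
are parametrised by `x₀`; the solution vanishing at `N` satisfies
`∑_{n<N} |xₙ|² ≤ ‖y‖²/(Im l)²`, and a limit point of the corresponding values `x₀` as `N → ∞`
gives a square-summable solution (`exists_l2_solution`).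
-/

open Filter Topology

noncomputable section

/-- Membership in the weighted ℓ² space with weight `w`. -/
def MemL2w (w : ℕ → ℝ) (f : ℕ → ℂ) : Prop :=
  Summable fun n => w n * ‖f n‖ ^ 2

/-- The weighted ℓ² inner product. -/
def innerW (w : ℕ → ℝ) (f g : ℕ → ℂ) : ℂ :=
  ∑' n, (w n : ℂ) * star (f n) * g n

/-- The formal tridiagonal action of the Jacobi matrix with off-diagonal entries `a`
and diagonal entries `b`:  `(Cx)₀ = b₀x₀ + a₀x₁`,
`(Cx)ₙ = aₙ₋₁xₙ₋₁ + bₙxₙ + aₙxₙ₊₁` for `n ≥ 1`. -/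
def jacobiAct (a b : ℕ → ℝ) (x : ℕ → ℂ) : ℕ → ℂ
  | 0 => (b 0 : ℂ) * x 0 + (a 0 : ℂ) * x 1
  | n + 1 => (a n : ℂ) * x n + (b (n + 1) : ℂ) * x (n + 1) + (a (n + 1) : ℂ) * x (n + 2)

/-- The maximal domain of the formal operator `T` inside the weighted ℓ² space. -/
def DomW (w : ℕ → ℝ) (T : (ℕ → ℂ) → ℕ → ℂ) : Set (ℕ → ℂ) :=
  {x | MemL2w w x ∧ MemL2w w (T x)}

/-- `T`, on its maximal domain in weighted ℓ², is self-adjoint: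
the graph of the adjoint operator coincides with the graph of `T`. -/
def IsSelfAdjointW (w : ℕ → ℝ) (T : (ℕ → ℂ) → ℕ → ℂ) : Prop :=
  ∀ y z : ℕ → ℂ, MemL2w w y → MemL2w w z →
    ((∀ x ∈ DomW w T, innerW w (T x) y = innerW w x z) ↔ (y ∈ DomW w T ∧ T y = z))

/-- The point spectrum (set of eigenvalues) of `T` on its maximal domain. -/
def eigenW (w : ℕ → ℝ) (T : (ℕ → ℂ) → ℕ → ℂ) : Set ℂ :=
  {l | ∃ x ∈ DomW w T, x ≠ 0 ∧ T x = fun n => l * x n}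

/-- The spectrum of `T`: those `l` for which `T - l` is not a bijection from the maximal
domain onto the weighted ℓ² space (for a closed operator this is the usual spectrum). -/
def spectrumW (w : ℕ → ℝ) (T : (ℕ → ℂ) → ℕ → ℂ) : Set ℂ :=
  {l | ¬ ((∀ x ∈ DomW w T, T x = (fun n => l * x n) → x = 0) ∧
          ∀ y : ℕ → ℂ, MemL2w w y → ∃ x ∈ DomW w T, (fun n => T x n - l * x n) = y)}

/-- The essential spectrum: the set of accumulation points of the spectrum. -/
def essSpectrumW (w : ℕ → ℝ) (T : (ℕ → ℂ) → ℕ → ℂ) : Set ℂ :=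
  {z | AccPt z (𝓟 (spectrumW w T))}

/-! ### Square-summable solutions of the recurrence at real energies -/

lemma exists_lim_of_bv (f : ℕ → ℝ) (h : Summable fun n => |f (n + 1) - f n|) :
    ∃ r, Tendsto f atTop (𝓝 r) := by
  apply cauchySeq_tendsto_of_complete
  apply cauchySeq_of_summable_dist
  simpa [Real.dist_eq, abs_sub_comm] using h

/-- The ratio limit is at most `1` since `aₙ → ∞`, and at least `1` since `∑ 1/aₙ = ∞`. -/
lemma ratio_tendsto_one (a : ℕ → ℝ) (ha : ∀ n, 0 < a n) (h1 : Tendsto a atTop atTop)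
    (h2 : ¬ Summable fun n : ℕ => 1 / a n)
    (h3a : Summable fun n : ℕ => |a (n + 1) / a (n + 2) - a n / a (n + 1)|) :
    Tendsto (fun n => a n / a (n + 1)) atTop (𝓝 1) := by
  obtain ⟨r, hr⟩ := exists_lim_of_bv (fun n => a n / a (n + 1)) h3a
  have hr1 : r = 1 := by
    rcases lt_trichotomy r 1 with h | h | h
    · exfalso
      apply h2
      refine summable_of_ratio_test_tendsto_lt_one h
        (Eventually.of_forall fun n => (one_div_pos.2 (ha n)).ne') ?_
      refine hr.congr fun n => ?_
      have e1 := ha n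
      have e2 := ha (n + 1)
      rw [Real.norm_of_nonneg (one_div_pos.2 e1).le, Real.norm_of_nonneg (one_div_pos.2 e2).le]
      field_simp
    · exact h
    · exfalso
      obtain ⟨N, hN⟩ := eventually_atTop.1 (hr.eventually (lt_mem_nhds h))
      have hle : ∀ n ≥ N, a n ≤ a N := by
        intro n hn
        induction n, hn using Nat.le_induction with
        | base => exact le_rfl
        | succ n hn ih =>
          have := (one_lt_div (ha (n + 1))).1 (hN n hn)
          linarith
      obtain ⟨M, hM⟩ := eventually_atTop.1 (h1.eventually (eventually_gt_atTop (a N)))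
      have e1 := hM (max M N) (le_max_left _ _)
      have e2 := hle (max M N) (le_max_right _ _)
      linarith
  rwa [hr1] at hr

/-- Real solutions of a recurrence `uₙ₊₂ = αₙuₙ₊₁ - (aₙ/aₙ₊₁)uₙ` with coefficients of bounded
variation and elliptic limit are square-summable only if they vanish. -/
lemma real_solution_eq_zero (a α : ℕ → ℝ) (ha : ∀ n, 0 < a n)
    (h2 : ¬ Summable fun n : ℕ => 1 / a n)
    (h3a : Summable fun n : ℕ => |a (n + 1) / a (n + 2) - a n / a (n + 1)|)
    (hβ : Tendsto (fun n => a n / a (n + 1)) atTop (𝓝 1))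
    (hα : Summable fun n : ℕ => |α (n + 1) - α n|)
    {A : ℝ} (hA : |A| < 2) (hαA : Tendsto α atTop (𝓝 A))
    (u : ℕ → ℝ) (hu : ∀ n, u (n + 2) = α n * u (n + 1) - a n / a (n + 1) * u n)
    (hs : Summable fun n => u n ^ 2) : ∀ n, u n = 0 := by
  set β : ℕ → ℝ := fun n => a n / a (n + 1) with hβdef
  have hβpos : ∀ n, 0 < β n := fun n => div_pos (ha _) (ha _)
  have haβ : ∀ n, a (n + 1) * β n = a n := fun n => mul_div_cancel₀ _ (ha (n + 1)).ne'
  have hu' : ∀ n, u (n + 2) = α n * u (n + 1) - β n * u n := hu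
  -- `c` is a lower ellipticity constant of the limiting form, with room to spare.
  obtain ⟨c, hc, hcA⟩ : ∃ c : ℝ, 0 < c ∧ |A| = 2 - 8 * c := ⟨(2 - |A|) / 8, by linarith, by ring⟩
  have e1 : ∀ᶠ n in atTop, 1 - c < β n := hβ.eventually (lt_mem_nhds (by linarith))
  have e2 : ∀ᶠ n in atTop, β n < 2 := hβ.eventually (gt_mem_nhds (by norm_num))
  have e3 : ∀ᶠ n in atTop, |α n| < 2 - 4 * c :=
    hαA.abs.eventually (gt_mem_nhds (by linarith))
  obtain ⟨N, hN⟩ := eventually_atTop.1 (e1.and (e2.and e3))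
  set Q : ℕ → ℝ := fun n => β n * u n ^ 2 - α n * (u n * u (n + 1)) + u (n + 1) ^ 2 with hQ
  have hab : ∀ x y s : ℝ, |s * (x * y)| ≤ |s| * ((x ^ 2 + y ^ 2) / 2) := by
    intro x y s
    rw [abs_mul]
    refine mul_le_mul_of_nonneg_left ?_ (abs_nonneg _)
    rw [abs_le]
    constructor <;> nlinarith [sq_nonneg (x + y), sq_nonneg (x - y)]
  have hlow : ∀ n ≥ N, c * (u n ^ 2 + u (n + 1) ^ 2) ≤ Q n := by
    intro n hn
    obtain ⟨f1, f2, f3⟩ := hN n hn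
    have g1 := (abs_le.1 (hab (u n) (u (n + 1)) (α n))).2
    have g2 := sq_nonneg (u n)
    have g3 := sq_nonneg (u (n + 1))
    have g4 : |α n| * ((u n ^ 2 + u (n + 1) ^ 2) / 2)
        ≤ (2 - 4 * c) * ((u n ^ 2 + u (n + 1) ^ 2) / 2) :=
      mul_le_mul_of_nonneg_right f3.le (by positivity)
    have g5 : (1 - c) * u n ^ 2 ≤ β n * u n ^ 2 := mul_le_mul_of_nonneg_right f1.le g2
    have g6 : 0 ≤ c * u (n + 1) ^ 2 := by positivity
    simp only [hQ]
    linarith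
  have hup : ∀ n ≥ N, Q n ≤ 3 * (u n ^ 2 + u (n + 1) ^ 2) := by
    intro n hn
    obtain ⟨f1, f2, f3⟩ := hN n hn
    have g1 := (abs_le.1 (hab (u n) (u (n + 1)) (α n))).1
    have g2 := sq_nonneg (u n)
    have g3 := sq_nonneg (u (n + 1))
    have g4 : |α n| * ((u n ^ 2 + u (n + 1) ^ 2) / 2)
        ≤ 2 * ((u n ^ 2 + u (n + 1) ^ 2) / 2) :=
      mul_le_mul_of_nonneg_right (by linarith) (by positivity)
    have g5 : β n * u n ^ 2 ≤ 2 * u n ^ 2 := mul_le_mul_of_nonneg_right f2.le g2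
    simp only [hQ]
    linarith
  have hQnn : ∀ n ≥ N, 0 ≤ Q n := fun n hn => le_trans (by positivity) (hlow n hn)
  set ε : ℕ → ℝ := fun n => (|β (n + 1) - β n| + |α (n + 1) - α n|) / c with hε
  have hεs : Summable ε := (h3a.add hα).div_const c
  have hεnn : ∀ n, 0 ≤ ε n := fun n => by positivity
  have hstep : ∀ n ≥ N, a n * Q n ≤ Real.exp (ε n) * (a (n + 1) * Q (n + 1)) := by
    intro n hn
    have hid : a (n + 1) * Q (n + 1) - a n * Q n = a (n + 1) *
        ((β (n + 1) - β n) * u (n + 1) ^ 2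
          - (α (n + 1) - α n) * (u (n + 1) * u (n + 2))) := by
      simp only [hQ]
      rw [← haβ n, show n + 1 + 1 = n + 2 from rfl, hu' n]
      ring
    have g1 := (abs_le.1 (hab (u (n + 1)) (u (n + 2)) (α (n + 1) - α n))).2
    have g2 : -(|β (n + 1) - β n| * u (n + 1) ^ 2) ≤ (β (n + 1) - β n) * u (n + 1) ^ 2 := by
      have := mul_le_mul_of_nonneg_right (neg_abs_le (β (n + 1) - β n)) (sq_nonneg (u (n + 1)))
      linarith
    have g3 := hlow (n + 1) (by omega)
    have g4 : -((|β (n + 1) - β n| + |α (n + 1) - α n|) * (u (n + 1) ^ 2 + u (n + 2) ^ 2)) ≤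
        (β (n + 1) - β n) * u (n + 1) ^ 2 - (α (n + 1) - α n) * (u (n + 1) * u (n + 2)) := by
      have k1 : 0 ≤ |β (n + 1) - β n| * u (n + 2) ^ 2 := by positivity
      have k2 : 0 ≤ |α (n + 1) - α n| * (u (n + 1) ^ 2 + u (n + 2) ^ 2) := by positivity
      linarith
    have g5 : (|β (n + 1) - β n| + |α (n + 1) - α n|) * (u (n + 1) ^ 2 + u (n + 2) ^ 2)
        ≤ ε n * Q (n + 1) := by
      have : (|β (n + 1) - β n| + |α (n + 1) - α n|) = ε n * c := by
        simp only [hε]; field_simp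
      rw [this, mul_assoc]
      exact mul_le_mul_of_nonneg_left g3 (hεnn n)
    have g6 : a (n + 1) * (-(ε n * Q (n + 1))) ≤ a (n + 1) * Q (n + 1) - a n * Q n := by
      rw [hid]
      exact mul_le_mul_of_nonneg_left (by linarith) (ha _).le
    have g7 : 0 ≤ a (n + 1) * Q (n + 1) := mul_nonneg (ha _).le (hQnn _ (by omega))
    have g8 := mul_le_mul_of_nonneg_right (Real.add_one_le_exp (ε n)) g7
    linarith
  have hiter : ∀ k, a N * Q N ≤
      Real.exp (∑ i ∈ Finset.range k, ε (N + i)) * (a (N + k) * Q (N + k)) := by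
    intro k
    induction k with
    | zero => simp
    | succ k ih =>
      refine ih.trans ?_
      rw [Finset.sum_range_succ, Real.exp_add, mul_assoc]
      exact mul_le_mul_of_nonneg_left (hstep (N + k) (by omega)) (Real.exp_pos _).le
  have hεN : Summable fun i => ε (N + i) := by
    simpa [add_comm] using (summable_nat_add_iff N).2 hεs
  set E := Real.exp (∑' i, ε (N + i)) with hE
  have hEpos : 0 < E := Real.exp_pos _
  have hbound : ∀ k, a N * Q N ≤ E * (a (N + k) * Q (N + k)) := by
    intro k
    refine (hiter k).trans ?_
    refine mul_le_mul_of_nonneg_right ?_ (mul_nonneg (ha _).le (hQnn _ (by omega)))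
    exact Real.exp_le_exp.2 (hεN.sum_le_tsum _ fun i _ => hεnn _)
  have hQ0 : Q N = 0 := by
    by_contra hne
    have hpos : 0 < a N * Q N :=
      mul_pos (ha N) (lt_of_le_of_ne (hQnn N le_rfl) (Ne.symm hne))
    apply h2
    rw [← summable_nat_add_iff N]
    have hss : Summable fun k => u (k + N) ^ 2 + u (k + N + 1) ^ 2 := by
      refine ((summable_nat_add_iff N).2 hs).add ?_
      simpa [add_assoc] using (summable_nat_add_iff (f := fun n => u n ^ 2) (N + 1)).2 hs
    refine Summable.of_nonneg_of_le (fun k => (one_div_pos.2 (ha _)).le) (fun k => ?_)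
      (hss.mul_left (3 * E / (a N * Q N)))
    have k1 := hbound k
    have k2 := hup (N + k) (by omega)
    rw [add_comm k N, div_mul_eq_mul_div, div_le_div_iff₀ (ha _) hpos]
    have k3 : E * (a (N + k) * Q (N + k)) ≤
        E * (a (N + k) * (3 * (u (N + k) ^ 2 + u (N + k + 1) ^ 2))) :=
      mul_le_mul_of_nonneg_left (mul_le_mul_of_nonneg_left k2 (ha _).le) hEpos.le
    linarith
  have hz : u N = 0 ∧ u (N + 1) = 0 := by
    have k := hlow N le_rfl
    rw [hQ0] at k
    have k' : u N ^ 2 + u (N + 1) ^ 2 ≤ 0 := by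
      by_contra hcon
      have := mul_pos hc (not_le.1 hcon)
      linarith
    constructor <;> nlinarith [sq_nonneg (u N), sq_nonneg (u (N + 1))]
  -- Since `βₙ ≠ 0`, the recurrence can be run backwards as well as forwards.
  have hdown : ∀ n, u n = 0 ∧ u (n + 1) = 0 → u 0 = 0 ∧ u 1 = 0 := by
    intro n
    induction n with
    | zero => exact id
    | succ n ih =>
      rintro ⟨k1, k2⟩
      refine ih ⟨?_, k1⟩
      have := hu' n
      rw [k1, show n + 2 = n + 1 + 1 from rfl, k2] at this
      have : β n * u n = 0 := by linarith
      exact (mul_eq_zero.1 this).resolve_left (hβpos n).ne'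
  have h0 := hdown N hz
  have hall : ∀ n, u n = 0 ∧ u (n + 1) = 0 := by
    intro n
    induction n with
    | zero => exact h0
    | succ n ih =>
      refine ⟨ih.2, ?_⟩
      have := hu' n
      rw [ih.1, ih.2] at this
      simpa using this
  exact fun n => (hall n).1

/-- The complex form of `real_solution_eq_zero`; the equation at index `0` is not required, which
is what makes it applicable to preimages of `(1, 0, 0, …)` as well as to eigenvectors. -/
lemma solution_eq_zero (a b : ℕ → ℝ) (ha : ∀ n, 0 < a n)
    (h1 : Tendsto a atTop atTop)
    (h2 : ¬ Summable fun n : ℕ => 1 / a n)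
    (h3a : Summable fun n : ℕ => |a (n + 1) / a (n + 2) - a n / a (n + 1)|)
    (h3b : Summable fun n : ℕ => |1 / a (n + 1) - 1 / a n|)
    (h3c : Summable fun n : ℕ => |b (n + 1) / a (n + 1) - b n / a n|)
    (h4 : ∃ L : ℝ, L < 2 ∧ Tendsto (fun n => |b n| / a n) atTop (𝓝 L))
    (l : ℝ) (x : ℕ → ℂ) (hx : MemL2w (fun _ => 1) x)
    (hrec : ∀ n, jacobiAct a b x (n + 1) = (l : ℂ) * x (n + 1)) : ∀ n, x n = 0 := by
  have hβ := ratio_tendsto_one a ha h1 h2 h3a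
  obtain ⟨q, hq⟩ := exists_lim_of_bv (fun n => b n / a n) h3c
  obtain ⟨L, hL, hbL⟩ := h4
  have hqL : |q| = L := by
    refine tendsto_nhds_unique (hq.abs.congr fun n => ?_) hbL
    rw [abs_div, abs_of_pos (ha n)]
  have hinv : Tendsto (fun n => 1 / a n) atTop (𝓝 0) := by
    simp only [one_div]
    exact h1.inv_tendsto_atTop
  set α : ℕ → ℝ := fun n => l * (1 / a (n + 1)) - b (n + 1) / a (n + 1) with hαd
  have hαA : Tendsto α atTop (𝓝 (-q)) := by
    have := (((tendsto_add_atTop_iff_nat 1).2 hinv).const_mul l).sub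
      ((tendsto_add_atTop_iff_nat 1).2 hq)
    simpa [hαd] using this
  have hα : Summable fun n => |α (n + 1) - α n| := by
    have s1 := ((summable_nat_add_iff 1).2 h3b).mul_left |l|
    have s2 := (summable_nat_add_iff 1).2 h3c
    refine Summable.of_nonneg_of_le (fun n => abs_nonneg _) (fun n => ?_) (s1.add s2)
    rw [← abs_mul]
    refine le_trans (le_of_eq ?_) (abs_sub _ _)
    simp only [hαd]
    congr 1
    ring
  have hre : ∀ n, x (n + 2) = (α n : ℂ) * x (n + 1) - ((a n / a (n + 1) : ℝ) : ℂ) * x n := by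
    intro n
    have h := hrec n
    have hne : (a (n + 1) : ℂ) ≠ 0 := by exact_mod_cast (ha (n + 1)).ne'
    simp only [jacobiAct] at h
    simp only [hαd]
    push_cast
    field_simp
    linear_combination h
  have hx' : Summable fun n => ‖x n‖ ^ 2 := by simpa [MemL2w] using hx
  have hA : |-q| < 2 := by rw [abs_neg, hqL]; exact hL
  have r1 := real_solution_eq_zero a α ha h2 h3a hβ hα hA hαA (fun n => (x n).re)
    (fun n => by rw [hre n]; simp [-Complex.ofReal_div])
    (Summable.of_nonneg_of_le (fun n => sq_nonneg _)
      (fun n => by rw [Complex.sq_norm, Complex.normSq_apply]; nlinarith [sq_nonneg (x n).im]) hx')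
  have r2 := real_solution_eq_zero a α ha h2 h3a hβ hα hA hαA (fun n => (x n).im)
    (fun n => by rw [hre n]; simp [-Complex.ofReal_div])
    (Summable.of_nonneg_of_le (fun n => sq_nonneg _)
      (fun n => by rw [Complex.sq_norm, Complex.normSq_apply]; nlinarith [sq_nonneg (x n).re]) hx')
  exact fun n => Complex.ext (r1 n) (r2 n)

/-! ### Green's identity and self-adjointness -/

lemma green (a b : ℕ → ℝ) (x y : ℕ → ℂ) (N : ℕ) :
    ∑ n ∈ Finset.range (N + 1),
      (star (jacobiAct a b x n) * y n - star (x n) * jacobiAct a b y n)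
    = (a N : ℂ) * (star (x (N + 1)) * y N - star (x N) * y (N + 1)) := by
  induction N with
  | zero => simp [jacobiAct]; ring
  | succ N ih =>
    rw [Finset.sum_range_succ, ih]
    simp [jacobiAct]
    ring

lemma summable_norm_mul {x y : ℕ → ℂ} (hx : Summable fun n => ‖x n‖ ^ 2)
    (hy : Summable fun n => ‖y n‖ ^ 2) : Summable fun n => ‖x n‖ * ‖y n‖ :=
  Summable.of_nonneg_of_le (fun n => by positivity)
    (fun n => by nlinarith [sq_nonneg (‖x n‖ - ‖y n‖), sq_nonneg ‖x n‖, sq_nonneg ‖y n‖])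
    (hx.add hy)

lemma summable_star_mul {x y : ℕ → ℂ} (hx : Summable fun n => ‖x n‖ ^ 2)
    (hy : Summable fun n => ‖y n‖ ^ 2) : Summable fun n => star (x n) * y n :=
  Summable.of_norm (by simpa using summable_norm_mul hx hy)

/-- Symmetry of the maximal operator under Carleman's condition `∑ 1/aₙ = ∞`. -/
lemma symmetric_of_carleman (a b : ℕ → ℝ) (ha : ∀ n, 0 < a n)
    (h2 : ¬ Summable fun n : ℕ => 1 / a n) (x y : ℕ → ℂ)
    (hx : Summable fun n => ‖x n‖ ^ 2) (hy : Summable fun n => ‖y n‖ ^ 2)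
    (hTx : Summable fun n => ‖jacobiAct a b x n‖ ^ 2)
    (hTy : Summable fun n => ‖jacobiAct a b y n‖ ^ 2) :
    ∑' n, star (jacobiAct a b x n) * y n = ∑' n, star (x n) * jacobiAct a b y n := by
  have s1 := summable_star_mul hTx hy
  have s2 := summable_star_mul hx hTy
  rw [← sub_eq_zero, ← s1.tsum_sub s2]
  have hlim := ((tendsto_add_atTop_iff_nat 1).2 (s1.sub s2).hasSum.tendsto_sum_nat).norm
  simp only [green] at hlim
  set ℓ := ∑' n, (star (jacobiAct a b x n) * y n - star (x n) * jacobiAct a b y n)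
  by_contra hne
  have hpos : 0 < ‖ℓ‖ := norm_pos_iff.2 hne
  apply h2
  obtain ⟨N, hN⟩ := eventually_atTop.1 (hlim.eventually (lt_mem_nhds (half_lt_self hpos)))
  rw [← summable_nat_add_iff N]
  have hx1 : Summable fun n => ‖x (n + 1)‖ ^ 2 := (summable_nat_add_iff 1).2 hx
  have hy1 : Summable fun n => ‖y (n + 1)‖ ^ 2 := (summable_nat_add_iff 1).2 hy
  have hsum := (summable_nat_add_iff N).2 ((summable_norm_mul hx1 hy).add (summable_norm_mul hx hy1))
  refine Summable.of_nonneg_of_le (fun k => (one_div_pos.2 (ha _)).le) (fun k => ?_)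
    (hsum.mul_left (2 / ‖ℓ‖))
  have k1 := hN (k + N) (by omega)
  rw [norm_mul, Complex.norm_real, Real.norm_of_nonneg (ha _).le] at k1
  have k2 := norm_sub_le (star (x (k + N + 1)) * y (k + N)) (star (x (k + N)) * y (k + N + 1))
  simp only [norm_mul, norm_star] at k2
  have k3 := mul_le_mul_of_nonneg_left k2 (ha (k + N)).le
  rw [div_mul_eq_mul_div, div_le_div_iff₀ (ha _) hpos]
  linarith

/-- Testing against the `m`-th basis vector recovers the `m`-th entry, by symmetry of the matrix. -/
lemma inner_single (a b : ℕ → ℝ) (y : ℕ → ℂ) (m : ℕ) :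
    ∑' n, star (jacobiAct a b (Pi.single m 1) n) * y n = jacobiAct a b y m := by
  have hz : ∀ n ∉ Finset.range (m + 2), jacobiAct a b (Pi.single m 1) n = 0 := by
    intro n hn
    simp only [Finset.mem_range, not_lt] at hn
    obtain ⟨k, rfl⟩ : ∃ k, n = k + 1 := ⟨n - 1, by omega⟩
    simp only [jacobiAct]
    rw [Pi.single_eq_of_ne (by omega), Pi.single_eq_of_ne (by omega),
      Pi.single_eq_of_ne (by omega)]
    simp
  rw [tsum_eq_sum (s := Finset.range (m + 2)) (fun n hn => by rw [hz n hn]; simp)]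
  have hg := green a b (Pi.single m 1) y (m + 1)
  rw [Finset.sum_sub_distrib, Pi.single_eq_of_ne (by omega), Pi.single_eq_of_ne (by omega)] at hg
  simp only [star_zero, zero_mul, sub_zero, mul_zero] at hg
  rw [sub_eq_zero.1 hg, Finset.sum_eq_single m]
  · simp
  · intro n _ hn
    simp [Pi.single_eq_of_ne hn]
  · intro h
    simp at h

lemma single_dom (a b : ℕ → ℝ) (m : ℕ) :
    (Pi.single m 1 : ℕ → ℂ) ∈ DomW (fun _ => 1) (jacobiAct a b) := by
  constructor
  · refine summable_of_ne_finset_zero (s := Finset.range (m + 1)) fun n hn => ?_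
    simp only [Finset.mem_range, not_lt] at hn
    rw [Pi.single_eq_of_ne (by omega)]
    simp
  · refine summable_of_ne_finset_zero (s := Finset.range (m + 2)) fun n hn => ?_
    simp only [Finset.mem_range, not_lt] at hn
    obtain ⟨k, rfl⟩ : ∃ k, n = k + 1 := ⟨n - 1, by omega⟩
    simp only [jacobiAct]
    rw [Pi.single_eq_of_ne (by omega), Pi.single_eq_of_ne (by omega),
      Pi.single_eq_of_ne (by omega)]
    simp

lemma selfAdjoint_of_carleman (a b : ℕ → ℝ) (ha : ∀ n, 0 < a n)
    (h2 : ¬ Summable fun n : ℕ => 1 / a n) :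
    IsSelfAdjointW (fun _ => 1) (jacobiAct a b) := by
  intro y z hy hz
  constructor
  · intro h
    have hT : jacobiAct a b y = z := by
      funext m
      have hm := h _ (single_dom a b m)
      simp only [innerW, Complex.ofReal_one, one_mul] at hm
      rw [inner_single, tsum_eq_single m (fun n hn => by simp [Pi.single_eq_of_ne hn])] at hm
      simpa using hm
    exact ⟨⟨hy, by rw [hT]; exact hz⟩, hT⟩
  · rintro ⟨⟨_, hTy⟩, rfl⟩ x ⟨hx, hTx⟩
    simp only [MemL2w, one_mul] at hx hTx hy hTy
    simpa [innerW] using symmetric_of_carleman a b ha h2 x y hx hy hTx hTy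

/-! ### Nonreal energies -/

/-- The solution of `(C - l)x = y` with `x₀ = t`. -/
def sol (a b : ℕ → ℝ) (l : ℂ) (y : ℕ → ℂ) (t : ℂ) : ℕ → ℂ
  | 0 => t
  | 1 => (l * t + y 0 - b 0 * t) / a 0
  | n + 2 => (l * sol a b l y t (n + 1) + y (n + 1) - b (n + 1) * sol a b l y t (n + 1)
      - a n * sol a b l y t n) / a (n + 1)

lemma sol_spec (a b : ℕ → ℝ) (ha : ∀ n, 0 < a n) (l : ℂ) (y : ℕ → ℂ) (t : ℂ) (n : ℕ) :
    jacobiAct a b (sol a b l y t) n = l * sol a b l y t n + y n := by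
  have hne : ∀ n, (a n : ℂ) ≠ 0 := fun n => by exact_mod_cast (ha n).ne'
  cases n with
  | zero =>
    simp only [jacobiAct, sol]
    rw [mul_div_cancel₀ _ (hne 0)]
    ring
  | succ n =>
    simp only [jacobiAct]
    rw [show sol a b l y t (n + 2) = (l * sol a b l y t (n + 1) + y (n + 1)
      - b (n + 1) * sol a b l y t (n + 1) - a n * sol a b l y t n) / a (n + 1) by rw [sol],
      mul_div_cancel₀ _ (hne (n + 1))]
    ring

lemma sol_affine (a b : ℕ → ℝ) (l : ℂ) (y : ℕ → ℂ) (t : ℂ) (n : ℕ) :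
    sol a b l y t n = sol a b l y 0 n + t * sol a b l 0 1 n := by
  induction n using Nat.twoStepInduction with
  | zero => simp [sol]
  | one => simp [sol]; ring
  | more n h1 h2 =>
    rw [sol, h1, h2, sol.eq_3 a b l y 0, sol.eq_3 a b l 0 1]
    simp only [Pi.zero_apply]
    ring

/-- A solution vanishing at `N + 1` gives no boundary term in Green's identity, so that
`|Im l| ∑ |xₙ|² ≤ ∑ |xₙ||yₙ|` over `n ≤ N`; the inequality between arithmetic and geometric means
gives the bound. -/
lemma truncated_bound (a b : ℕ → ℝ) (l : ℂ) (x y : ℕ → ℂ)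
    (hx : ∀ n, jacobiAct a b x n = l * x n + y n) (N : ℕ) (hN : x (N + 1) = 0) :
    l.im ^ 2 * ∑ n ∈ Finset.range (N + 1), ‖x n‖ ^ 2 ≤ ∑ n ∈ Finset.range (N + 1), ‖y n‖ ^ 2 := by
  have hg := green a b x x N
  rw [hN] at hg
  simp only [star_zero, zero_mul, mul_zero, sub_zero] at hg
  have him := congrArg Complex.im hg
  rw [Complex.im_sum] at him
  have hterm : ∀ n, (star (jacobiAct a b x n) * x n - star (x n) * jacobiAct a b x n).im
      = -2 * (l.im * ‖x n‖ ^ 2 + (star (x n) * y n).im) := by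
    intro n
    rw [hx n, Complex.sq_norm, Complex.normSq_apply]
    simp
    ring
  simp only [hterm, Complex.zero_im] at him
  rw [← Finset.mul_sum, Finset.sum_add_distrib, ← Finset.mul_sum] at him
  have heq : l.im * ∑ n ∈ Finset.range (N + 1), ‖x n‖ ^ 2
      = -∑ n ∈ Finset.range (N + 1), (star (x n) * y n).im := by linarith
  have hb : ∀ n, l.im * -(star (x n) * y n).im ≤ (l.im ^ 2 * ‖x n‖ ^ 2 + ‖y n‖ ^ 2) / 2 := by
    intro n
    have h := Complex.abs_im_le_norm (star (x n) * y n)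
    rw [norm_mul, norm_star] at h
    have h' : l.im * -(star (x n) * y n).im ≤ |l.im| * (‖x n‖ * ‖y n‖) := by
      refine (le_abs_self _).trans ?_
      rw [abs_mul, abs_neg]
      exact mul_le_mul_of_nonneg_left h (abs_nonneg _)
    nlinarith [sq_nonneg (|l.im| * ‖x n‖ - ‖y n‖), sq_abs l.im]
  have hs := Finset.sum_le_sum fun n (_ : n ∈ Finset.range (N + 1)) => hb n
  rw [← Finset.mul_sum, Finset.sum_neg_distrib, ← heq, ← Finset.sum_div, Finset.sum_add_distrib,
    ← Finset.mul_sum] at hs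
  nlinarith

lemma exists_l2_solution (a b : ℕ → ℝ) (ha : ∀ n, 0 < a n) (l : ℂ) (hl : l.im ≠ 0)
    (y : ℕ → ℂ) (hy : Summable fun n => ‖y n‖ ^ 2) :
    ∃ x : ℕ → ℂ, (Summable fun n => ‖x n‖ ^ 2) ∧ ∀ n, jacobiAct a b x n = l * x n + y n := by
  have hl2 : 0 < l.im ^ 2 := by positivity
  -- A zero of the homogeneous solution at `N + 1` would force it to vanish on `[0, N]`.
  have hp : ∀ N, sol a b l 0 1 (N + 1) ≠ 0 := by
    intro N h0
    have h := truncated_bound a b l _ _ (sol_spec a b ha l 0 1) N h0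
    have h1 : (1 : ℝ) ≤ ∑ n ∈ Finset.range (N + 1), ‖sol a b l 0 1 n‖ ^ 2 := by
      refine le_trans ?_ (Finset.single_le_sum (fun n _ => sq_nonneg ‖sol a b l 0 1 n‖)
        (Finset.mem_range.2 (Nat.succ_pos N)))
      simp [sol]
    simp at h
    nlinarith
  set K : ℝ := (∑' n, ‖y n‖ ^ 2) / l.im ^ 2 with hK
  have ht : ∀ N, ∃ t, sol a b l y t (N + 1) = 0 := fun N =>
    ⟨-(sol a b l y 0 (N + 1) / sol a b l 0 1 (N + 1)), by
      rw [sol_affine, neg_mul, div_mul_cancel₀ _ (hp N)]; ring⟩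
  choose t ht using ht
  have hbound : ∀ N, ∑ n ∈ Finset.range (N + 1), ‖sol a b l y (t N) n‖ ^ 2 ≤ K := by
    intro N
    have h := truncated_bound a b l _ _ (sol_spec a b ha l y (t N)) N (ht N)
    have h' := hy.sum_le_tsum (Finset.range (N + 1)) (fun n _ => sq_nonneg ‖y n‖)
    rw [hK, le_div_iff₀ hl2]
    linarith
  have htK : ∀ N, t N ∈ Metric.closedBall (0 : ℂ) (K + 1) := by
    intro N
    have h := Finset.single_le_sum (fun n _ => sq_nonneg ‖sol a b l y (t N) n‖)
        (Finset.mem_range.2 (Nat.succ_pos N))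
    have h' := h.trans (hbound N)
    simp only [sol] at h'
    rw [mem_closedBall_zero_iff]
    nlinarith [sq_nonneg (‖t N‖ - 1)]
  obtain ⟨s, _, φ, hφ, hlim⟩ := (isCompact_closedBall (0 : ℂ) (K + 1)).tendsto_subseq htK
  refine ⟨sol a b l y s, ?_, sol_spec a b ha l y s⟩
  have hcoord : ∀ n, Tendsto (fun k => sol a b l y (t (φ k)) n) atTop (𝓝 (sol a b l y s n)) := by
    intro n
    rw [sol_affine a b l y s n]
    simp only [fun k => sol_affine a b l y (t (φ k)) n]
    exact (hlim.mul_const _).const_add _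
  refine summable_of_sum_range_le (c := K) (fun n => sq_nonneg _) fun M => ?_
  refine le_of_tendsto (tendsto_finsetSum _ fun n _ => ((hcoord n).norm.pow 2)) ?_
  filter_upwards [eventually_ge_atTop M] with k hk
  refine le_trans ?_ (hbound (φ k))
  refine Finset.sum_le_sum_of_subset_of_nonneg ?_ fun n _ _ => sq_nonneg _
  have := hφ.id_le k
  simp only [id] at this
  exact Finset.range_subset_range.2 (by omega)

lemma nonreal_injective (a b : ℕ → ℝ) (ha : ∀ n, 0 < a n)
    (h2 : ¬ Summable fun n : ℕ => 1 / a n) (l : ℂ) (hl : l.im ≠ 0) (x : ℕ → ℂ)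
    (hx : x ∈ DomW (fun _ => 1) (jacobiAct a b)) (hT : jacobiAct a b x = fun n => l * x n) :
    x = 0 := by
  obtain ⟨hx1, hx2⟩ := hx
  simp only [MemL2w, one_mul] at hx1 hx2
  have h := symmetric_of_carleman a b ha h2 x x hx1 hx1 hx2 hx2
  have e1 : ∀ n, star (l * x n) * x n = star l * ((‖x n‖ ^ 2 : ℝ) : ℂ) := fun n => by
    rw [Complex.ofReal_pow, ← Complex.conj_mul']; simp [mul_assoc]
  have e2 : ∀ n, star (x n) * (l * x n) = l * ((‖x n‖ ^ 2 : ℝ) : ℂ) := fun n => by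
    rw [Complex.ofReal_pow, ← Complex.conj_mul']; simp; ring
  simp only [hT, e1, e2, tsum_mul_left, ← Complex.ofReal_tsum] at h
  have him := congrArg Complex.im h
  simp at him
  have hz : ∑' n, ‖x n‖ ^ 2 = 0 := by
    by_contra hne
    have : l.im * ∑' n, ‖x n‖ ^ 2 = 0 := by linarith
    exact (mul_ne_zero hl hne) this
  have hz' := (hasSum_zero_iff_of_nonneg fun n => sq_nonneg ‖x n‖).1 (hz ▸ hx1.hasSum)
  funext n
  simpa using congrFun hz' n

/-- Theorem (Janas–Moszyński): bounded variation conditions imply that the Jacobi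
matrix is self-adjoint, has no eigenvalues and has spectrum ℝ. -/
theorem jacobi_boundedVariation_spectrum_real
    (a b : ℕ → ℝ) (ha : ∀ n, 0 < a n)
    (h1 : Tendsto a atTop atTop)
    (h2 : ¬ Summable fun n : ℕ => 1 / a n)
    (h3a : Summable fun n : ℕ => |a (n + 1) / a (n + 2) - a n / a (n + 1)|)
    (h3b : Summable fun n : ℕ => |1 / a (n + 1) - 1 / a n|)
    (h3c : Summable fun n : ℕ => |b (n + 1) / a (n + 1) - b n / a n|)
    (h4 : ∃ L : ℝ, L < 2 ∧ Tendsto (fun n => |b n| / a n) atTop (𝓝 L)) :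
    IsSelfAdjointW (fun _ => 1) (jacobiAct a b) ∧
    eigenW (fun _ => 1) (jacobiAct a b) = ∅ ∧
    spectrumW (fun _ => 1) (jacobiAct a b) = Set.range ((↑) : ℝ → ℂ) := by
  have hsol := solution_eq_zero a b ha h1 h2 h3a h3b h3c h4
  refine ⟨selfAdjoint_of_carleman a b ha h2, ?_, ?_⟩
  · rw [Set.eq_empty_iff_forall_notMem]
    rintro l ⟨x, hx, hne, hT⟩
    apply hne
    by_cases hl : l.im = 0
    · have hlr : ((l.re : ℝ) : ℂ) = l := Complex.ext (by simp) (by simp [hl])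
      funext n
      exact hsol l.re x hx.1 (fun n => by rw [hlr, hT]) n
    · exact nonreal_injective a b ha h2 l hl x hx hT
  · ext l
    constructor
    · intro hmem
      by_contra hnr
      have hl : l.im ≠ 0 := fun hl => hnr ⟨l.re, Complex.ext (by simp) (by simp [hl])⟩
      apply hmem
      refine ⟨fun x hx hT => nonreal_injective a b ha h2 l hl x hx hT, fun y hy => ?_⟩
      simp only [MemL2w, one_mul] at hy
      obtain ⟨x, hx, hTx⟩ := exists_l2_solution a b ha l hl y hy
      refine ⟨x, ⟨by simpa [MemL2w] using hx, ?_⟩, funext fun n => by rw [hTx n]; ring⟩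
      simp only [MemL2w, one_mul, hTx]
      refine Summable.of_nonneg_of_le (fun n => sq_nonneg _) (fun n => ?_)
        ((hx.mul_left (2 * ‖l‖ ^ 2)).add (hy.mul_left 2))
      have h := norm_add_le (l * x n) (y n)
      rw [norm_mul] at h
      have h' := pow_le_pow_left₀ (norm_nonneg _) h 2
      nlinarith [sq_nonneg (‖l‖ * ‖x n‖ - ‖y n‖)]
    · rintro ⟨r, rfl⟩ ⟨_, hsurj⟩
      obtain ⟨x, hx, hTx⟩ := hsurj (Pi.single 0 1) (single_dom a b 0).1
      have hz := hsol r x hx.1 fun n => by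
        have h := congrFun hTx (n + 1)
        rw [Pi.single_eq_of_ne (by omega)] at h
        exact sub_eq_zero.1 h
      have h := congrFun hTx 0
      simp [jacobiAct, hz] at h
end
end

section
/- Let {a_n} be a sequence of positive reals such that a_n → ∞, ∑_{n≥0} 1/a_n = ∞, and the sequence {a_{n−1}/a_n} is of bounded variation (∑_{n} |a_n/a_{n+1} − a_{n−1}/a_n| < ∞). Then a_{n−1}/a_n → 1 (and consequently a_{n+1}/a_n → 1). -/
open Filter Topology

/-!
Bounded variation makes `r n = a n / a (n + 1)` a Cauchy sequence, so it has a limit `L`.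
Since `r n` is also the ratio of consecutive terms of `∑ 1 / a n`, the ratio test would make that
series converge if `L < 1`. If `L > 1`, then `a` is eventually decreasing, hence bounded above,
against `a → ∞`. So `L = 1`, and the other limit is obtained by inverting.
-/

/-- If `aₙ → ∞`, `∑ 1/aₙ = ∞` and the sequence `aₙ₋₁/aₙ` has bounded variation,
then `aₙ₋₁/aₙ → 1` (and consequently `aₙ₊₁/aₙ → 1`). -/
theorem ratio_tendsto_one_of_boundedVariation
    (a : ℕ → ℝ) (ha : ∀ n, 0 < a n)
    (h1 : Tendsto a atTop atTop)
    (h2 : ¬ Summable fun n : ℕ => 1 / a n)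
    (h3 : Summable fun n : ℕ => |a (n + 1) / a (n + 2) - a n / a (n + 1)|) :
    Tendsto (fun n => a n / a (n + 1)) atTop (𝓝 1) ∧
    Tendsto (fun n => a (n + 1) / a n) atTop (𝓝 1) := by
  have hC : CauchySeq fun n => a n / a (n + 1) := by
    apply cauchySeq_of_summable_dist
    refine h3.congr fun n => ?_
    rw [dist_comm, Real.dist_eq]
  obtain ⟨L, hL⟩ := cauchySeq_tendsto_of_complete hC
  have hL_ge : 1 ≤ L := by
    by_contra! hlt
    refine h2 (summable_of_ratio_test_tendsto_lt_one hlt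
      (Eventually.of_forall fun n => (one_div_pos.2 (ha n)).ne') (hL.congr fun n => ?_))
    rw [Real.norm_of_nonneg (one_div_pos.2 (ha _)).le,
      Real.norm_of_nonneg (one_div_pos.2 (ha _)).le, one_div, one_div, inv_div_inv]
  have hL_le : L ≤ 1 := by
    by_contra! hgt
    obtain ⟨N, hN⟩ := eventually_atTop.1 (hL.eventually_const_lt hgt)
    have hbound : ∀ n ≥ N, a n ≤ a N := by
      intro n hn
      induction n, hn using Nat.le_induction with
      | base => exact le_rfl
      | succ k hk ih => exact ((one_lt_div (ha _)).1 (hN k hk)).le.trans ih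
    obtain ⟨n, hlt, hn⟩ := ((h1.eventually_gt_atTop (a N)).and (eventually_ge_atTop N)).exists
    exact (hbound n hn).not_gt hlt
  obtain rfl : L = 1 := le_antisymm hL_le hL_ge
  refine ⟨hL, ?_⟩
  simpa only [inv_div, inv_one] using hL.inv₀ one_ne_zero
end
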